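/- Let 𝒟 ⊂ ℝ be a finite set with at least two elements, let ρ > 0, and let d_min = min{ |x₁ − x₂| : x₁, x₂ ∈ 𝒟, x₁ ≠ x₂ } be its minimum distance. Then there exists θ ∈ ℝ such that ∑_{x ∈ 𝒟} exp(−ρ·x²) < ∑_{k ∈ ℤ} exp(−ρ·(k·d_min + θ)²). -/

import Mathlib

open Real

noncomputable section

/-!
Choose `θ ∈ [0, d]`, where `d` is the minimum distance, so that the gap `(θ - d, θ)` around the
origin between two neighbouring points of the lattice `d ℤ + θ` contains no point of `𝒟`. Rounding
every point of `𝒟` towards the origin, to the next lattice point, then never crosses the origin, so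
it does not increase the absolute value. Since distinct points of `𝒟` are at least `d` apart, it is
also injective. Each Gaussian term on the left is therefore at most its own term on the right, and
infinitely many positive terms on the right are left over.
-/

section RoundTowardZero

variable {K : Type*} [CommRing K] [LinearOrder K] [FloorRing K]

/-- The integer part of `t` in the sense of truncation: `t` rounded to an integer in the direction
of `0`. It picks the lattice point that a point of the constellation is compared with. -/
def roundTowardZero (t : K) : ℤ :=
  if 0 ≤ t then ⌊t⌋ else ⌈t⌉

lemma roundTowardZero_of_nonneg {t : K} (ht : 0 ≤ t) : roundTowardZero t = ⌊t⌋ :=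
  if_pos ht

lemma roundTowardZero_of_neg {t : K} (ht : t < 0) : roundTowardZero t = ⌈t⌉ :=
  if_neg ht.not_ge

variable [IsStrictOrderedRing K]

lemma roundTowardZero_lt_of_add_one_le {s t : K} (hs : s ≤ -1 ∨ 0 ≤ s) (hst : s + 1 ≤ t) :
    roundTowardZero s < roundTowardZero t := by
  rcases hs with hs | hs
  · rw [roundTowardZero_of_neg (by linarith)]
    rcases le_or_gt 0 t with ht | ht
    · have hceil : ⌈s⌉ ≤ -1 := Int.ceil_le.mpr (by exact_mod_cast hs)
      have hfloor : 0 ≤ ⌊t⌋ := Int.floor_nonneg.mpr ht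
      rw [roundTowardZero_of_nonneg ht]
      lia
    · rw [roundTowardZero_of_neg ht, ← Int.add_one_le_iff, ← Int.ceil_add_one]
      exact Int.ceil_mono hst
  · rw [roundTowardZero_of_nonneg hs, roundTowardZero_of_nonneg (by linarith),
      ← Int.add_one_le_iff, ← Int.floor_add_one]
    exact Int.floor_mono hst

lemma abs_roundTowardZero_mul_add_le {d θ t : K} (hθ : θ ∈ Set.Icc 0 d) (ht : t ≤ -1 ∨ 0 ≤ t) :
    |roundTowardZero t * d + θ| ≤ |t * d + θ| := by
  have hd : 0 ≤ d := hθ.1.trans hθ.2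
  rcases ht with ht | ht
  · rw [roundTowardZero_of_neg (by linarith)]
    have hle : t * d ≤ ⌈t⌉ * d := mul_le_mul_of_nonneg_right (Int.le_ceil t) hd
    have hceil : (⌈t⌉ : K) ≤ -1 := by exact_mod_cast Int.ceil_le.mpr (by exact_mod_cast ht)
    have hnonpos : ⌈t⌉ * d + θ ≤ 0 := by
      linarith [mul_le_mul_of_nonneg_right hceil hd, hθ.2]
    exact abs_le_abs_of_nonpos hnonpos (by linarith)
  · rw [roundTowardZero_of_nonneg ht]
    have hfloor : (0 : K) ≤ ⌊t⌋ := by exact_mod_cast Int.floor_nonneg.mpr ht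
    have hnonneg : 0 ≤ ⌊t⌋ * d + θ := add_nonneg (mul_nonneg hfloor hd) hθ.1
    gcongr
    exact Int.floor_le t

end RoundTowardZero

lemma exists_forall_le_sub_or_le {G : Type*} [AddCommGroup G] [LinearOrder G]
    [IsOrderedAddMonoid G] (D : Finset G) {d : G} (hd : 0 ≤ d)
    (hsep : ∀ x ∈ D, ∀ y ∈ D, x < y → x + d ≤ y) :
    ∃ θ ∈ Set.Icc 0 d, ∀ x ∈ D, x ≤ θ - d ∨ θ ≤ x := by
  -- `θ` is the least nonnegative element of `D`, capped at `d`.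
  obtain ⟨θ, hθ, hmin⟩ := ((insert d D).filter (0 ≤ ·)).exists_min_image id ⟨d, by simp [hd]⟩
  simp only [Finset.mem_filter, Finset.mem_insert, id, and_imp, forall_eq_or_imp] at hθ hmin
  refine ⟨θ, ⟨hθ.2, hmin.1 hd⟩, fun x hx ↦ ?_⟩
  rcases le_or_gt 0 x with hx₀ | hx₀
  · exact .inr (hmin.2 x hx hx₀)
  · left
    rcases hθ.1 with rfl | hθD
    · simpa using hx₀.le
    · exact le_sub_iff_add_le.mpr (hsep x hx θ hθD (hx₀.trans_le hθ.2))

theorem exists_strictMonoOn_abs_mul_add_le {K : Type*} [Field K] [LinearOrder K]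
    [IsStrictOrderedRing K] [FloorRing K] (D : Finset K) {d : K} (hd : 0 < d)
    (hsep : ∀ x ∈ D, ∀ y ∈ D, x < y → x + d ≤ y) :
    ∃ (θ : K) (f : K → ℤ), StrictMonoOn f D ∧ ∀ x ∈ D, |f x * d + θ| ≤ |x| := by
  obtain ⟨θ, hθ, hgap⟩ := exists_forall_le_sub_or_le D hd.le hsep
  have hcoord : ∀ x ∈ D, (x - θ) / d ≤ -1 ∨ 0 ≤ (x - θ) / d := fun x hx ↦
    (hgap x hx).imp (fun h ↦ (div_le_iff₀ hd).mpr (by linarith))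
      (fun h ↦ div_nonneg (sub_nonneg.mpr h) hd.le)
  refine ⟨θ, fun x ↦ roundTowardZero ((x - θ) / d), fun x hx y hy hxy ↦ ?_, fun x hx ↦ ?_⟩
  · refine roundTowardZero_lt_of_add_one_le (hcoord x hx) ?_
    rw [div_add_one hd.ne']
    gcongr
    linarith [hsep x hx y hy hxy]
  · simpa [div_mul_cancel₀ _ hd.ne'] using abs_roundTowardZero_mul_add_le hθ (hcoord x hx)

lemma sum_lt_tsum_of_injOn {ι κ : Type*} [Infinite κ] {s : Finset ι} {f : ι → κ} {a : ι → ℝ}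
    {b : κ → ℝ} (hf : Set.InjOn f s) (hab : ∀ i ∈ s, a i ≤ b (f i)) (hpos : ∀ k, 0 < b k)
    (hsum : Summable b) : ∑ i ∈ s, a i < ∑' k, b k := by
  classical
  obtain ⟨k, hk⟩ := Infinite.exists_notMem_finset (s.image f)
  calc ∑ i ∈ s, a i
      ≤ ∑ i ∈ s, b (f i) := Finset.sum_le_sum hab
    _ = ∑ j ∈ s.image f, b j := (Finset.sum_image hf).symm
    _ < ∑ j ∈ insert k (s.image f), b j := by
        rw [Finset.sum_insert hk]
        exact lt_add_of_pos_left _ (hpos k)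
    _ ≤ ∑' j, b j := hsum.sum_le_tsum _ fun j _ ↦ (hpos j).le

lemma summable_exp_neg_mul_int_mul_add_sq {ρ d : ℝ} (hρ : 0 < ρ) (hd : d ≠ 0) (θ : ℝ) :
    Summable fun k : ℤ ↦ exp (-ρ * (k * d + θ) ^ 2) := by
  have ht : 0 < ρ * d ^ 2 / π := by positivity
  refine (HurwitzZeta.hasSum_int_evenKernel (θ / d) ht).summable.congr fun k ↦ ?_
  congr 1
  field_simp

lemma infsep_eq_sInf_dist {α : Type*} [PseudoMetricSpace α] (s : Set α) :
    s.infsep = sInf {d : ℝ | ∃ x ∈ s, ∃ y ∈ s, x ≠ y ∧ d = dist x y} := by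
  rcases s.subsingleton_or_nontrivial with hs | hs
  · have hempty : {d : ℝ | ∃ x ∈ s, ∃ y ∈ s, x ≠ y ∧ d = dist x y} = ∅ :=
      Set.eq_empty_of_forall_notMem fun _ ⟨_, hx, _, hy, hxy, _⟩ ↦ hxy (hs hx hy)
    rw [hs.infsep_zero, hempty, Real.sInf_empty]
  · have hglb : IsGLB {d : ℝ | ∃ x ∈ s, ∃ y ∈ s, x ≠ y ∧ d = dist x y} s.infsep := by
      refine ⟨?_, fun d hd ↦ hs.le_infsep fun x hx y hy hxy ↦ hd ⟨x, hx, y, hy, hxy, rfl⟩⟩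
      rintro _ ⟨x, hx, y, hy, hxy, rfl⟩
      exact Set.infsep_le_dist_of_mem hx hy hxy
    obtain ⟨x, hx, y, hy, hxy⟩ := hs
    exact (hglb.csInf_eq ⟨_, x, hx, y, hy, hxy, rfl⟩).symm

lemma add_infsep_le_of_lt {s : Set ℝ} {x y : ℝ} (hx : x ∈ s) (hy : y ∈ s) (hxy : x < y) :
    x + s.infsep ≤ y := by
  have hdist := Set.infsep_le_dist_of_mem hy hx hxy.ne'
  rw [Real.dist_eq, abs_of_pos (sub_pos.mpr hxy)] at hdist
  linarith

theorem finite_constellation_sum_lt_lattice_sum_general (D : Finset ℝ) {d : ℝ} (hd : 0 < d)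
    (hsep : ∀ x ∈ D, ∀ y ∈ D, x < y → x + d ≤ y) {g : ℝ → ℝ} (hpos : ∀ x, 0 < g x)
    (hanti : ∀ x y, |x| ≤ |y| → g y ≤ g x) (hsum : ∀ θ, Summable fun k : ℤ ↦ g (k * d + θ)) :
    ∃ θ : ℝ, ∑ x ∈ D, g x < ∑' k : ℤ, g (k * d + θ) := by
  obtain ⟨θ, f, hmono, hle⟩ := exists_strictMonoOn_abs_mul_add_le D hd hsep
  exact ⟨θ, sum_lt_tsum_of_injOn hmono.injOn (fun x hx ↦ hanti _ _ (hle x hx))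
    (fun k ↦ hpos _) (hsum θ)⟩

/-- **Lemma 10.** For a finite set `𝒟 ⊂ ℝ` with at least two points and minimum
distance `d_min`, there is a `θ ∈ ℝ` with
`∑_{x ∈ 𝒟} exp(−ρx²) < ∑_{k ∈ ℤ} exp(−ρ(k·d_min + θ)²)`. -/
theorem finite_constellation_sum_lt_lattice_sum
    (D : Finset ℝ) (hD : 2 ≤ D.card) (ρ : ℝ) (hρ : 0 < ρ) :
    ∃ θ : ℝ, ∑ x ∈ D, Real.exp (-ρ * x ^ 2)
      < ∑' k : ℤ, Real.exp (-ρ * ((k : ℝ) *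
          (sInf {d : ℝ | ∃ x₁ ∈ D, ∃ x₂ ∈ D, x₁ ≠ x₂ ∧ d = |x₁ - x₂|}) + θ) ^ 2) := by
  have hpos : 0 < (D : Set ℝ).infsep :=
    D.infsep_pos_iff_nontrivial.mpr (Finset.one_lt_card_iff_nontrivial.mp hD)
  have hanti (x y : ℝ) (hxy : |x| ≤ |y|) : exp (-ρ * y ^ 2) ≤ exp (-ρ * x ^ 2) :=
    exp_le_exp.mpr (mul_le_mul_of_nonpos_left (sq_le_sq.mpr hxy) (neg_nonpos.mpr hρ.le))
  simpa only [infsep_eq_sInf_dist, Finset.mem_coe, Real.dist_eq] using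
    finite_constellation_sum_lt_lattice_sum_general D hpos
      (fun _ hx _ hy ↦ add_infsep_le_of_lt hx hy) (fun _ ↦ exp_pos _) hanti
      (summable_exp_neg_mul_int_mul_add_sq hρ hpos.ne')
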